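/- Let ε ∈ (0,1), α ∈ (0,1), Q ∈ (0, ε]. Let f be holomorphic on the open unit disc such that f and f′ extend continuously to the closed unit disc with sup_{|z|≤1}|f′(z)| ≤ (1−ε)/2, and set Φ(w) = w + Q/w + f(w) for w ∈ 𝕋. Then there is a constant C = C(ε, α), independent of f, Q and h, such that for every h holomorphic on the open unit disc whose derivative h′ extends continuously to the closed disc, the function T h(w) = (1/(2πi)) ∮_{|ξ|=1} (conj(Φ(ξ)) − conj(Φ(w)))/(Φ(ξ) − Φ(w)) · h′(ξ) dξ is α-Hölder continuous on 𝕋 with Hölder norm ‖T h‖_{C^α(𝕋)} ≤ C·sup_{ξ∈𝕋}|h′(ξ)|. -/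

import Mathlib

open Metric

/-- The singular integral `I₁(f)h(w) = (1/2πi)∮_{|ξ|=1}
(conj Φ(ξ) - conj Φ(w))/(Φ(ξ) - Φ(w)) · h'(ξ) dξ` with
`Φ(w) = w + Q/w + f(w)`. -/
noncomputable def I1Int (Q : ℝ) (f h' : ℂ → ℂ) (w : ℂ) : ℂ :=
  (∮ ξ in C(0, 1),
      (starRingEnd ℂ (ξ + (Q : ℂ) / ξ + f ξ) - starRingEnd ℂ (w + (Q : ℂ) / w + f w)) /
        ((ξ + (Q : ℂ) / ξ + f ξ) - (w + (Q : ℂ) / w + f w)) * h' ξ) /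
    (2 * Real.pi * Complex.I)

/-
The kernel `conj a / a` with `a = Φ ξ - Φ w` is only bounded, but its variation in `w` is of size
`‖w₁ - w₂‖ / ‖ξ - w₂‖`, because `Φ` is bi-Lipschitz on the circle. Interpolating this with the
trivial bound `2` gives `(‖w₁ - w₂‖ / ‖ξ - w₂‖) ^ α` up to a constant, and for `α < 1` the
singularity `‖ξ - w₂‖ ^ (-α)` is integrable over the circle, uniformly in `w₂`.
-/

open MeasureTheory intervalIntegral
open scoped ComplexConjugate NNReal Real

variable {E : Type*} [NormedAddCommGroup E] [NormedSpace ℂ E]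

theorem norm_conj_div_self_le_one (a : ℂ) : ‖conj a / a‖ ≤ 1 := by
  rw [norm_div, Complex.norm_conj]
  exact div_self_le_one _

theorem norm_conj_div_self_sub_le (a : ℂ) {b : ℂ} (hb : b ≠ 0) :
    ‖conj a / a - conj b / b‖ ≤ 2 * (‖a - b‖ / ‖b‖) := by
  rcases eq_or_ne a 0 with rfl | ha
  · simp [hb]
  have hsplit : conj a / a - conj b / b = (conj (a - b) - conj a / a * (a - b)) / b := by
    rw [map_sub]
    field_simp
    ring
  have hnum : ‖conj (a - b) - conj a / a * (a - b)‖ ≤ 2 * ‖a - b‖ :=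
    calc ‖conj (a - b) - conj a / a * (a - b)‖
        ≤ ‖a - b‖ + ‖conj a / a‖ * ‖a - b‖ := by
          simpa only [Complex.norm_conj, norm_mul] using
            norm_sub_le (conj (a - b)) (conj a / a * (a - b))
      _ ≤ ‖a - b‖ + 1 * ‖a - b‖ := by gcongr; exact norm_conj_div_self_le_one a
      _ = 2 * ‖a - b‖ := by ring
  rw [hsplit, norm_div, ← mul_div_assoc]
  gcongr

theorem norm_conj_div_self_sub_le_rpow (a : ℂ) {b : ℂ} {α : ℝ} (hb : b ≠ 0)
    (hα : α ∈ Set.Icc (0 : ℝ) 1) :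
    ‖conj a / a - conj b / b‖ ≤ 2 * (‖a - b‖ / ‖b‖) ^ α := by
  rcases le_total 1 (‖a - b‖ / ‖b‖) with hfar | hnear
  · calc ‖conj a / a - conj b / b‖ ≤ ‖conj a / a‖ + ‖conj b / b‖ := norm_sub_le _ _
      _ ≤ 2 * 1 := by linarith [norm_conj_div_self_le_one a, norm_conj_div_self_le_one b]
      _ ≤ 2 * (‖a - b‖ / ‖b‖) ^ α := by gcongr; exact Real.one_le_rpow hfar hα.1
  · refine (norm_conj_div_self_sub_le a hb).trans ?_
    gcongr
    exact Real.self_le_rpow_of_le_one (by positivity) hnear hα.2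

theorem norm_conj_div_self_comp_sub_le {F : ℂ → ℂ} {ξ x y : ℂ} {δ L α : ℝ} (hδ : 0 < δ)
    (hα : α ∈ Set.Icc (0 : ℝ) 1) (hξy : ξ ≠ y) (hlow : δ * ‖ξ - y‖ ≤ ‖F ξ - F y‖)
    (hup : ‖F x - F y‖ ≤ L * ‖x - y‖) :
    ‖conj (F ξ - F x) / (F ξ - F x) - conj (F ξ - F y) / (F ξ - F y)‖ ≤
      2 * (L / δ * ‖x - y‖) ^ α * ‖ξ - y‖ ^ (-α) := by
  have hd : 0 < ‖ξ - y‖ := norm_pos_iff.2 (sub_ne_zero.2 hξy)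
  have hFd : 0 < ‖F ξ - F y‖ := (mul_pos hδ hd).trans_le hlow
  have hLd : 0 ≤ L * ‖x - y‖ := (norm_nonneg _).trans hup
  calc ‖conj (F ξ - F x) / (F ξ - F x) - conj (F ξ - F y) / (F ξ - F y)‖
      ≤ 2 * (‖F x - F y‖ / ‖F ξ - F y‖) ^ α := by
        simpa only [sub_sub_sub_cancel_left, norm_sub_rev (F y)] using
          norm_conj_div_self_sub_le_rpow (F ξ - F x) (norm_pos_iff.1 hFd) hα
    _ ≤ 2 * (L * ‖x - y‖ / (δ * ‖ξ - y‖)) ^ α := by gcongr; exact hα.1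
    _ = 2 * (L / δ * ‖x - y‖) ^ α * ‖ξ - y‖ ^ (-α) := by
        rw [← div_div, Real.div_rpow (by positivity) hd.le, Real.rpow_neg hd.le, div_mul_eq_mul_div]
        ring

theorem intervalIntegrable_abs_rpow {r : ℝ} (hr : -1 < r) (a b : ℝ) :
    IntervalIntegrable (fun t : ℝ ↦ |t| ^ r) volume a b := by
  have hzero (x : ℝ) : IntervalIntegrable (fun t : ℝ ↦ |t| ^ r) volume 0 x := by
    refine intervalIntegrable_of_even (by simp) (fun x hx ↦ ?_) (by simp)
    refine (intervalIntegrable_rpow' hr).congr fun t ht ↦ ?_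
    rw [Set.uIoc_of_le hx.le] at ht
    simp only [abs_of_pos ht.1]
  exact (hzero a).symm.trans (hzero b)

theorem integral_abs_rpow {r b : ℝ} (hr : -1 < r) (hb : 0 ≤ b) :
    ∫ t in (-b)..b, |t| ^ r = 2 * b ^ (r + 1) / (r + 1) := by
  have hright : ∫ t in (0 : ℝ)..b, |t| ^ r = b ^ (r + 1) / (r + 1) := by
    rw [integral_congr (g := fun t ↦ t ^ r), integral_rpow (.inl hr),
      Real.zero_rpow (by linarith), sub_zero]
    intro t ht
    rw [Set.uIcc_of_le hb] at ht
    simp only [abs_of_nonneg ht.1]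
  have hleft : ∫ t in (-b)..0, |t| ^ r = ∫ t in (0 : ℝ)..b, |t| ^ r := by
    simpa using (integral_comp_neg (a := 0) (b := b) fun t : ℝ ↦ |t| ^ r).symm
  rw [← integral_add_adjacent_intervals (intervalIntegrable_abs_rpow hr _ 0)
    (intervalIntegrable_abs_rpow hr 0 _), hleft, hright]
  ring

theorem norm_circleMap_sub_circleMap (c : ℂ) (R θ φ : ℝ) :
    ‖circleMap c R θ - circleMap c R φ‖ = 2 * |R| * |Real.sin ((θ - φ) / 2)| := by
  have hfactor : circleMap c R θ - circleMap c R φ =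
      circleMap 0 R φ * (Complex.exp (Complex.I * (θ - φ : ℝ)) - 1) := by
    simp only [circleMap, zero_add, mul_sub, mul_one, mul_assoc, ← Complex.exp_add]
    rw [add_sub_add_left_eq_sub]
    congr 3
    push_cast
    ring
  rw [hfactor, norm_mul, Complex.norm_exp_I_mul_ofReal_sub_one, norm_circleMap_zero, norm_mul,
    Real.norm_two, Real.norm_eq_abs]
  ring

theorem mul_abs_sub_le_norm_circleMap_sub (c : ℂ) (R : ℝ) {θ φ : ℝ} (h : |θ - φ| ≤ π) :
    2 * |R| / π * |θ - φ| ≤ ‖circleMap c R θ - circleMap c R φ‖ := by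
  have habs : |(θ - φ) / 2| = |θ - φ| / 2 := by rw [abs_div, abs_two]
  have hsin : 2 / π * (|θ - φ| / 2) ≤ |Real.sin ((θ - φ) / 2)| :=
    habs ▸ Real.mul_abs_le_abs_sin (by linarith)
  rw [norm_circleMap_sub_circleMap]
  calc 2 * |R| / π * |θ - φ| = 2 * |R| * (2 / π * (|θ - φ| / 2)) := by ring
    _ ≤ 2 * |R| * |Real.sin ((θ - φ) / 2)| := by gcongr

theorem circleIntegral_eq_integral_sub_pi_add_pi (g : ℂ → E) (c : ℂ) (R φ : ℝ) :
    ∮ ξ in C(c, R), g ξ =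
      ∫ θ in (φ - π)..(φ + π), deriv (circleMap c R) θ • g (circleMap c R θ) := by
  have hper : Function.Periodic
      (fun θ ↦ deriv (circleMap c R) θ • g (circleMap c R θ)) (2 * π) := fun θ ↦ by
    simp only [deriv_circleMap, periodic_circleMap _ R θ]
  rw [circleIntegral, ← zero_add (2 * π), hper.intervalIntegral_add_eq 0 (φ - π)]
  congr 1
  ring

theorem norm_deriv_circleMap_smul_le_of_norm_le_rpow_neg {g : ℂ → E} {c : ℂ} {R A α θ φ : ℝ}
    (hR : 0 < R) (hα : 0 ≤ α) (hA : 0 ≤ A) (hθφ : θ ≠ φ) (hπ : |θ - φ| ≤ π)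
    (hg : ∀ ξ ∈ sphere c R, ξ ≠ circleMap c R φ → ‖g ξ‖ ≤ A * ‖ξ - circleMap c R φ‖ ^ (-α)) :
    ‖deriv (circleMap c R) θ • g (circleMap c R θ)‖ ≤
      R * (A * (2 * R / π) ^ (-α)) * |θ - φ| ^ (-α) := by
  have hchord : 2 * R / π * |θ - φ| ≤ ‖circleMap c R θ - circleMap c R φ‖ := by
    simpa only [abs_of_pos hR] using mul_abs_sub_le_norm_circleMap_sub c R hπ
  have hpos : 0 < 2 * R / π * |θ - φ| := by
    have := abs_pos.2 (sub_ne_zero.2 hθφ)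
    positivity
  calc ‖deriv (circleMap c R) θ • g (circleMap c R θ)‖
      = R * ‖g (circleMap c R θ)‖ := by simp [norm_smul, abs_of_pos hR]
    _ ≤ R * (A * ‖circleMap c R θ - circleMap c R φ‖ ^ (-α)) := by
        gcongr
        exact hg _ (circleMap_mem_sphere c hR.le θ)
          (sub_ne_zero.1 (norm_pos_iff.1 (hpos.trans_le hchord)))
    _ ≤ R * (A * (2 * R / π * |θ - φ|) ^ (-α)) := by
        gcongr R * (A * ?_)
        exact Real.rpow_le_rpow_of_nonpos hpos hchord (neg_nonpos.2 hα)
    _ = R * (A * (2 * R / π) ^ (-α)) * |θ - φ| ^ (-α) := by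
        rw [Real.mul_rpow (by positivity) (abs_nonneg _)]
        ring

theorem norm_circleIntegral_le_of_norm_le_rpow_neg {g : ℂ → E} {c w : ℂ} {R A α : ℝ}
    (hR : 0 < R) (hα : α ∈ Set.Ico (0 : ℝ) 1) (hA : 0 ≤ A) (hw : w ∈ sphere c R)
    (hg : ∀ ξ ∈ sphere c R, ξ ≠ w → ‖g ξ‖ ≤ A * ‖ξ - w‖ ^ (-α)) :
    ‖∮ ξ in C(c, R), g ξ‖ ≤ π * A * (2 * R) ^ (1 - α) / (1 - α) := by
  have hr : -1 < -α := neg_lt_neg hα.2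
  obtain ⟨φ, rfl⟩ : w ∈ Set.range (circleMap c R) := by rwa [range_circleMap, abs_of_pos hR]
  have hbound : ∀ᵐ θ, θ ∈ Set.Ioc (φ - π) (φ + π) →
      ‖deriv (circleMap c R) θ • g (circleMap c R θ)‖ ≤
        R * (A * (2 * R / π) ^ (-α)) * |θ - φ| ^ (-α) := by
    filter_upwards [Measure.ae_ne volume φ] with θ hne hmem
    exact norm_deriv_circleMap_smul_le_of_norm_le_rpow_neg hR hα.1 hA hne
      (abs_le.2 ⟨by linarith [hmem.1], by linarith [hmem.2]⟩) hg
  have hint : IntervalIntegrable (fun θ ↦ R * (A * (2 * R / π) ^ (-α)) * |θ - φ| ^ (-α))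
      volume (φ - π) (φ + π) := by
    simpa [sub_eq_neg_add, add_comm] using
      ((intervalIntegrable_abs_rpow hr (-π) π).comp_sub_right φ).const_mul
        (R * (A * (2 * R / π) ^ (-α)))
  calc ‖∮ ξ in C(c, R), g ξ‖
      ≤ ∫ θ in (φ - π)..(φ + π), R * (A * (2 * R / π) ^ (-α)) * |θ - φ| ^ (-α) := by
        rw [circleIntegral_eq_integral_sub_pi_add_pi g c R φ]
        exact norm_integral_le_of_norm_le (by linarith [Real.pi_pos]) hbound hint
    _ = R * (A * (2 * R / π) ^ (-α)) * (2 * π ^ (1 - α) / (1 - α)) := by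
        rw [intervalIntegral.integral_const_mul, integral_comp_sub_right (fun t ↦ |t| ^ (-α)) φ,
          sub_sub_cancel_left, add_sub_cancel_left, integral_abs_rpow hr Real.pi_pos.le,
          neg_add_eq_sub]
    _ = π * A * (2 * R) ^ (1 - α) / (1 - α) := by
        rw [Real.div_rpow (by positivity) Real.pi_pos.le, Real.rpow_sub (by positivity : 0 < 2 * R),
          Real.rpow_sub Real.pi_pos, Real.rpow_neg (by positivity), Real.rpow_neg Real.pi_pos.le,
          Real.rpow_one, Real.rpow_one]
        field_simp

theorem circleIntegrable_conj_div_self_smul {F : ℂ → ℂ} {g : ℂ → E} {c : ℂ} {R : ℝ}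
    (hF : ContinuousOn F (sphere c |R|)) (hg : CircleIntegrable g c R) (b : ℂ) :
    CircleIntegrable (fun ξ ↦ (conj (F ξ - b) / (F ξ - b)) • g ξ) c R := by
  have hFc : Continuous fun θ ↦ F (circleMap c R θ) - b :=
    (hF.comp_continuous (continuous_circleMap c R) (circleMap_mem_sphere' c R)).sub
      continuous_const
  have hmeas : Measurable fun θ ↦ conj (F (circleMap c R θ) - b) / (F (circleMap c R θ) - b) :=
    (Complex.continuous_conj.comp hFc).measurable.div hFc.measurable
  have hle : ∀ θ, ‖conj (F (circleMap c R θ) - b) / (F (circleMap c R θ) - b)‖ ≤ 1 :=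
    fun θ ↦ norm_conj_div_self_le_one _
  exact ⟨hg.1.bdd_smul 1 hmeas.aestronglyMeasurable (.of_forall hle),
    hg.2.bdd_smul 1 hmeas.aestronglyMeasurable (.of_forall hle)⟩

/-- The integral operator on the circle `C(c, R)` with kernel `conj (F ξ - F w) / (F ξ - F w)`,
normalised by `(2πi)⁻¹`. The term `I₁` is the case of the unit circle with `F = Φ`. -/
noncomputable def conjQuotientTransform (c : ℂ) (R : ℝ) (F : ℂ → ℂ) (g : ℂ → E) (w : ℂ) : E :=
  (2 * π * Complex.I : ℂ)⁻¹ • ∮ ξ in C(c, R), (conj (F ξ - F w) / (F ξ - F w)) • g ξ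

theorem norm_conjQuotientTransform_le {g : ℂ → E} {c : ℂ} {R M : ℝ} (hR : 0 ≤ R)
    (hM : ∀ ξ ∈ sphere c R, ‖g ξ‖ ≤ M) (F : ℂ → ℂ) (w : ℂ) :
    ‖conjQuotientTransform c R F g w‖ ≤ R * M := by
  refine circleIntegral.norm_two_pi_i_inv_smul_integral_le_of_norm_le_const hR fun ξ hξ ↦ ?_
  rw [norm_smul]
  exact (mul_le_of_le_one_left (norm_nonneg _) (norm_conj_div_self_le_one _)).trans (hM ξ hξ)

theorem norm_conjQuotientTransform_sub_le {F : ℂ → ℂ} {g : ℂ → E} {c w₁ w₂ : ℂ} {R M δ α : ℝ}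
    {L : ℝ≥0} (hR : 0 < R) (hδ : 0 < δ) (hα : α ∈ Set.Ico (0 : ℝ) 1)
    (hlow : ∀ x ∈ sphere c R, ∀ y ∈ sphere c R, δ * ‖x - y‖ ≤ ‖F x - F y‖)
    (hL : LipschitzOnWith L F (sphere c R)) (hg : CircleIntegrable g c R)
    (hM : ∀ ξ ∈ sphere c R, ‖g ξ‖ ≤ M) (hw₁ : w₁ ∈ sphere c R) (hw₂ : w₂ ∈ sphere c R) :
    ‖conjQuotientTransform c R F g w₁ - conjQuotientTransform c R F g w₂‖ ≤
      (2 * R) ^ (1 - α) / (1 - α) * (L / δ) ^ α * M * ‖w₁ - w₂‖ ^ α := by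
  have hM0 : 0 ≤ M := (norm_nonneg _).trans (hM w₁ hw₁)
  have hint := circleIntegrable_conj_div_self_smul
    (by simpa only [abs_of_pos hR] using hL.continuousOn) hg
  have hkernel : ∀ ξ ∈ sphere c R, ξ ≠ w₂ →
      ‖(conj (F ξ - F w₁) / (F ξ - F w₁)) • g ξ - (conj (F ξ - F w₂) / (F ξ - F w₂)) • g ξ‖ ≤
        2 * (L / δ * ‖w₁ - w₂‖) ^ α * M * ‖ξ - w₂‖ ^ (-α) := fun ξ hξ hne ↦ by
    rw [← sub_smul, norm_smul, mul_right_comm]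
    gcongr
    · exact norm_conj_div_self_comp_sub_le hδ ⟨hα.1, hα.2.le⟩ hne (hlow ξ hξ w₂ hw₂)
        (hL.norm_sub_le hw₁ hw₂)
    · exact hM ξ hξ
  have hnorm : ‖(2 * π * Complex.I : ℂ)⁻¹‖ = (2 * π)⁻¹ := by simp [Real.pi_pos.le]
  calc ‖conjQuotientTransform c R F g w₁ - conjQuotientTransform c R F g w₂‖
      = (2 * π)⁻¹ * ‖∮ ξ in C(c, R), ((conj (F ξ - F w₁) / (F ξ - F w₁)) • g ξ -
          (conj (F ξ - F w₂) / (F ξ - F w₂)) • g ξ)‖ := by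
        rw [conjQuotientTransform, conjQuotientTransform, ← smul_sub,
          ← circleIntegral.integral_sub (hint _) (hint _), norm_smul, hnorm]
    _ ≤ (2 * π)⁻¹ *
          (π * (2 * (L / δ * ‖w₁ - w₂‖) ^ α * M) * (2 * R) ^ (1 - α) / (1 - α)) := by
        gcongr
        exact norm_circleIntegral_le_of_norm_le_rpow_neg hR hα (by positivity) hw₂ hkernel
    _ = (2 * R) ^ (1 - α) / (1 - α) * (L / δ) ^ α * M * ‖w₁ - w₂‖ ^ α := by
        rw [Real.mul_rpow (by positivity) (norm_nonneg _)]
        field_simp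

/-- The boundary map `Φ` of the V-state: a perturbation by `f` of the Joukowski map `w ↦ w + q / w`,
which sends the unit circle to an ellipse. The parameter `q` may be complex. -/
noncomputable def perturbedJoukowski (q : ℂ) (f : ℂ → ℂ) (w : ℂ) : ℂ :=
  w + q / w + f w

theorem norm_div_sub_div_of_mem_sphere (q : ℂ) {x y : ℂ} (hx : x ∈ sphere (0 : ℂ) 1)
    (hy : y ∈ sphere (0 : ℂ) 1) : ‖q / x - q / y‖ = ‖q‖ * ‖x - y‖ := by
  have hinv := dist_inv_inv₀ (ne_of_mem_sphere hx one_ne_zero) (ne_of_mem_sphere hy one_ne_zero)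
  rw [mem_sphere_zero_iff_norm.1 hx, mem_sphere_zero_iff_norm.1 hy, mul_one, div_one,
    dist_eq_norm, dist_eq_norm] at hinv
  rw [div_eq_mul_inv, div_eq_mul_inv, ← mul_sub, norm_mul, hinv]

theorem lipschitzOnWith_div_add {q : ℂ} {f : ℂ → ℂ} {K : ℝ≥0}
    (hf : LipschitzOnWith K f (sphere 0 1)) :
    LipschitzOnWith (‖q‖₊ + K) (fun w ↦ q / w + f w) (sphere 0 1) := by
  refine LipschitzOnWith.add (LipschitzOnWith.of_dist_le_mul fun x hx y hy ↦ ?_) hf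
  rw [dist_eq_norm, dist_eq_norm, norm_div_sub_div_of_mem_sphere q hx hy, coe_nnnorm]

theorem lipschitzOnWith_perturbedJoukowski {q : ℂ} {f : ℂ → ℂ} {K : ℝ≥0}
    (hf : LipschitzOnWith K f (sphere 0 1)) :
    LipschitzOnWith (1 + (‖q‖₊ + K)) (perturbedJoukowski q f) (sphere 0 1) := by
  have hid : LipschitzOnWith 1 (fun w : ℂ ↦ w) (sphere 0 1) := LipschitzWith.id.lipschitzOnWith
  have hassoc : perturbedJoukowski q f = fun w ↦ w + (q / w + f w) :=
    funext fun _ ↦ add_assoc _ _ _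
  rw [hassoc]
  exact hid.add (lipschitzOnWith_div_add hf)

theorem le_norm_perturbedJoukowski_sub {q : ℂ} {f : ℂ → ℂ} {K : ℝ≥0}
    (hf : LipschitzOnWith K f (sphere 0 1)) {x y : ℂ} (hx : x ∈ sphere (0 : ℂ) 1)
    (hy : y ∈ sphere (0 : ℂ) 1) :
    (1 - (‖q‖ + K)) * ‖x - y‖ ≤ ‖perturbedJoukowski q f x - perturbedJoukowski q f y‖ := by
  have hsplit : perturbedJoukowski q f x - perturbedJoukowski q f y =
      (x - y) + ((q / x + f x) - (q / y + f y)) := by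
    simp only [perturbedJoukowski]
    ring
  calc (1 - (‖q‖ + K)) * ‖x - y‖ = ‖x - y‖ - (‖q‖ + K) * ‖x - y‖ := by ring
    _ ≤ ‖x - y‖ - ‖(q / x + f x) - (q / y + f y)‖ := by
        gcongr
        exact (lipschitzOnWith_div_add hf).norm_sub_le hx hy
    _ ≤ ‖(x - y) + ((q / x + f x) - (q / y + f y))‖ := norm_sub_le_norm_add _ _
    _ = ‖perturbedJoukowski q f x - perturbedJoukowski q f y‖ := by rw [hsplit]

theorem I1Int_eq_conjQuotientTransform (Q : ℝ) (f g : ℂ → ℂ) :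
    I1Int Q f g = conjQuotientTransform 0 1 (perturbedJoukowski Q f) g := by
  funext w
  simp only [I1Int, conjQuotientTransform, perturbedJoukowski, map_sub, smul_eq_mul,
    div_eq_inv_mul _ (2 * (π : ℂ) * Complex.I)]

theorem norm_I1Int_le {Q M : ℝ} {f g : ℂ → ℂ} (hM : ∀ ξ ∈ sphere (0 : ℂ) 1, ‖g ξ‖ ≤ M) (w : ℂ) :
    ‖I1Int Q f g w‖ ≤ M := by
  simpa only [I1Int_eq_conjQuotientTransform, one_mul] using
    norm_conjQuotientTransform_le zero_le_one hM (perturbedJoukowski Q f) w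

theorem norm_I1Int_sub_le {Q M δ α : ℝ} {K : ℝ≥0} {f g : ℂ → ℂ} (hδ : 0 < δ)
    (hα : α ∈ Set.Ico (0 : ℝ) 1) (hf : LipschitzOnWith K f (sphere 0 1))
    (hQK : |Q| + K ≤ 1 - δ) (hg : CircleIntegrable g 0 1)
    (hM : ∀ ξ ∈ sphere (0 : ℂ) 1, ‖g ξ‖ ≤ M) {w₁ w₂ : ℂ} (hw₁ : w₁ ∈ sphere (0 : ℂ) 1)
    (hw₂ : w₂ ∈ sphere (0 : ℂ) 1) :
    ‖I1Int Q f g w₁ - I1Int Q f g w₂‖ ≤ 2 / ((1 - α) * δ ^ α) * M * ‖w₁ - w₂‖ ^ α := by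
  have hq : ‖(Q : ℂ)‖ + K ≤ 1 - δ := by rwa [Complex.norm_real, Real.norm_eq_abs]
  have hlow : ∀ x ∈ sphere (0 : ℂ) 1, ∀ y ∈ sphere (0 : ℂ) 1,
      δ * ‖x - y‖ ≤ ‖perturbedJoukowski Q f x - perturbedJoukowski Q f y‖ := fun x hx y hy ↦
    le_trans (by gcongr; linarith) (le_norm_perturbedJoukowski_sub hf hx hy)
  have hlip : LipschitzOnWith 2 (perturbedJoukowski Q f) (sphere 0 1) := by
    refine (lipschitzOnWith_perturbedJoukowski hf).weaken (NNReal.coe_le_coe.1 ?_)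
    push_cast
    linarith
  rw [I1Int_eq_conjQuotientTransform]
  refine (norm_conjQuotientTransform_sub_le one_pos hδ hα hlow hlip hg hM hw₁ hw₂).trans_eq ?_
  rw [NNReal.coe_ofNat, mul_one, Real.div_rpow zero_le_two hδ.le, Real.rpow_sub two_pos,
    Real.rpow_one]
  field_simp

theorem lipschitzOnWith_closedBall_of_norm_hasDerivAt_le {𝕜 G : Type*} [RCLike 𝕜]
    [NormedAddCommGroup G] [NormedSpace 𝕜 G] {f f' : 𝕜 → G} {c : 𝕜} {r : ℝ} {K : ℝ≥0}
    (hr : r ≠ 0) (hf : ContinuousOn f (closedBall c r))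
    (hf' : ∀ z ∈ ball c r, HasDerivAt f (f' z) z) (hK : ∀ z ∈ ball c r, ‖f' z‖ ≤ K) :
    LipschitzOnWith K f (closedBall c r) := by
  have hball : LipschitzOnWith K f (ball c r) :=
    (convex_ball c r).lipschitzOnWith_of_nnnorm_hasDerivWithin_le
      (fun z hz ↦ (hf' z hz).hasDerivWithinAt) hK
  rw [← closure_ball c hr] at hf ⊢
  exact hball.closure hf

theorem I1_holder_estimate_general {δ α : ℝ} (hδ : 0 < δ) (hα : α ∈ Set.Ico (0 : ℝ) 1) :
    ∃ C : ℝ, 0 < C ∧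
    ∀ (Q : ℝ) (K : ℝ≥0) (f g : ℂ → ℂ), LipschitzOnWith K f (sphere 0 1) → |Q| + K ≤ 1 - δ →
      CircleIntegrable g 0 1 → ∀ M : ℝ, (∀ ξ ∈ sphere (0 : ℂ) 1, ‖g ξ‖ ≤ M) →
      (∀ w, ‖I1Int Q f g w‖ ≤ C * M) ∧
      (∀ w₁ ∈ sphere (0 : ℂ) 1, ∀ w₂ ∈ sphere (0 : ℂ) 1,
        ‖I1Int Q f g w₁ - I1Int Q f g w₂‖ ≤ C * M * ‖w₁ - w₂‖ ^ α) := by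
  refine ⟨max 1 (2 / ((1 - α) * δ ^ α)), lt_max_of_lt_left one_pos, fun Q K f g hf hQK hg M hM ↦ ?_⟩
  have hM0 : 0 ≤ M := (norm_nonneg _).trans (hM 1 (by simp))
  refine ⟨fun w ↦ (norm_I1Int_le hM w).trans ?_, fun w₁ hw₁ w₂ hw₂ ↦
    (norm_I1Int_sub_le hδ hα hf hQK hg hM hw₁ hw₂).trans ?_⟩
  · exact le_mul_of_one_le_left hM0 (le_max_left _ _)
  · gcongr
    exact le_max_right _ _

/-- Hölder estimate for `I₁`: for `ε, α ∈ (0,1)` there is `C = C(ε,α)` such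
that for every `Q ∈ (0,ε]`, every `f` holomorphic on the disc with `f, f'`
continuous up to the boundary and `sup_{|z|≤1}|f'| ≤ (1-ε)/2`, and every `h`
holomorphic on the disc with `h'` continuous up to the boundary, the function
`I₁(f)h` satisfies `‖I₁(f)h‖_{C^α(𝕋)} ≤ C·sup_{ξ∈𝕋}|h'(ξ)|`. -/
theorem I1_holder_estimate (ε α : ℝ) (hε : ε ∈ Set.Ioo (0:ℝ) 1)
    (hα : α ∈ Set.Ioo (0:ℝ) 1) :
    ∃ C : ℝ, 0 < C ∧
    ∀ (Q : ℝ), Q ∈ Set.Ioc (0:ℝ) ε →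
    ∀ (f f' h h' : ℂ → ℂ),
      DifferentiableOn ℂ f (ball (0:ℂ) 1) →
      ContinuousOn f (closedBall (0:ℂ) 1) →
      (∀ z ∈ ball (0:ℂ) 1, HasDerivAt f (f' z) z) →
      ContinuousOn f' (closedBall (0:ℂ) 1) →
      (∀ z ∈ closedBall (0:ℂ) 1, ‖f' z‖ ≤ (1 - ε) / 2) →
      DifferentiableOn ℂ h (ball (0:ℂ) 1) →
      (∀ z ∈ ball (0:ℂ) 1, HasDerivAt h (h' z) z) →
      ContinuousOn h' (closedBall (0:ℂ) 1) →
      ∀ M : ℝ, (∀ ξ ∈ sphere (0:ℂ) 1, ‖h' ξ‖ ≤ M) →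
      (∀ w ∈ sphere (0:ℂ) 1, ‖I1Int Q f h' w‖ ≤ C * M) ∧
      (∀ w₁ ∈ sphere (0:ℂ) 1, ∀ w₂ ∈ sphere (0:ℂ) 1,
        ‖I1Int Q f h' w₁ - I1Int Q f h' w₂‖
          ≤ C * M * ‖w₁ - w₂‖ ^ α) := by
  have hδ : 0 < (1 - ε) / 2 := by linarith [hε.2]
  obtain ⟨C, hC, hbound⟩ := I1_holder_estimate_general hδ (Set.Ioo_subset_Ico_self hα)
  refine ⟨C, hC, fun Q hQ f f' h h' _ hf hf' _ hK _ _ hh' M hM ↦ ?_⟩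
  have hlip : LipschitzOnWith ⟨(1 - ε) / 2, hδ.le⟩ f (closedBall 0 1) :=
    lipschitzOnWith_closedBall_of_norm_hasDerivAt_le one_ne_zero hf hf'
      fun z hz ↦ hK z (ball_subset_closedBall hz)
  have hQK : |Q| + (1 - ε) / 2 ≤ 1 - (1 - ε) / 2 := by linarith [abs_of_pos hQ.1, hQ.2]
  have hint : CircleIntegrable h' 0 1 :=
    (hh'.mono sphere_subset_closedBall).circleIntegrable zero_le_one
  obtain ⟨hsup, hholder⟩ :=
    hbound Q _ f h' (hlip.mono sphere_subset_closedBall) hQK hint M hM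
  exact ⟨fun w _ ↦ hsup w, hholder⟩
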